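/- arXiv:2205.02342 — 2 statements merged into one kernel-verified Lean document; each statement's English description precedes it below -/
import Mathlib

section
/- If a positive linear map Φ : M_n(ℂ) → M_m(ℂ) satisfies tr[Φ†(K*) Φ†(Y)^{t-1} Φ†(K) Φ†(X)^{-t}] ≤ tr[K* Y^{t-1} K X^{-t}] for all 0 ≤ t ≤ 1, all positive definite X, Y ∈ M_m(ℂ) and all K ∈ M_m(ℂ), then Φ is a Schwarz map. -/
open Matrix
open scoped ComplexOrder

/-- Real power of a matrix, defined spectrally for Hermitian matrices (junk value `0` otherwise). -/
noncomputable def mpow {k : ℕ} (A : Matrix (Fin k) (Fin k) ℂ) (p : ℝ) : Matrix (Fin k) (Fin k) ℂ :=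
  if hA : A.IsHermitian then
    (hA.eigenvectorUnitary : Matrix (Fin k) (Fin k) ℂ) *
      Matrix.diagonal (fun i => ((hA.eigenvalues i ^ p : ℝ) : ℂ)) *
      (hA.eigenvectorUnitary : Matrix (Fin k) (Fin k) ℂ)ᴴ
  else 0

/-- A Schwarz map: `Φ(K*K) ≥ Φ(K)*Φ(K)` for all `K`. -/
def IsSchwarz {a b : ℕ} (Φ : Matrix (Fin a) (Fin a) ℂ →ₗ[ℂ] Matrix (Fin b) (Fin b) ℂ) : Prop :=
  ∀ K, (Φ (Kᴴ * K) - (Φ K)ᴴ * Φ K).PosSemidef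

/-- A positive map: sends positive semidefinite matrices to positive semidefinite matrices. -/
def IsPositiveMap {a b : ℕ} (Φ : Matrix (Fin a) (Fin a) ℂ →ₗ[ℂ] Matrix (Fin b) (Fin b) ℂ) : Prop :=
  ∀ X, X.PosSemidef → (Φ X).PosSemidef

/-- `Ψ` is the Hilbert–Schmidt adjoint of `Φ`: `⟨X, Φ Y⟩ = ⟨Ψ X, Y⟩`. -/
def IsHSAdjoint {a b : ℕ} (Φ : Matrix (Fin a) (Fin a) ℂ →ₗ[ℂ] Matrix (Fin b) (Fin b) ℂ)
    (Ψ : Matrix (Fin b) (Fin b) ℂ →ₗ[ℂ] Matrix (Fin a) (Fin a) ℂ) : Prop :=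
  ∀ X Y, (Xᴴ * Φ Y).trace = ((Ψ X)ᴴ * Y).trace

theorem aux_polar {k : ℕ} (K : Matrix (Fin k) (Fin k) ℂ) :
    (4 : ℂ) • K = (1 + K)ᴴ * (1 + K) - (1 - K)ᴴ * (1 - K)
      + (-Complex.I) • ((1 + Complex.I • K)ᴴ * (1 + Complex.I • K))
      + Complex.I • ((1 - Complex.I • K)ᴴ * (1 - Complex.I • K)) := by
  simp only [conjTranspose_add, conjTranspose_sub, conjTranspose_smul, conjTranspose_one,
    add_mul, mul_add, sub_mul, mul_sub, one_mul, mul_one, smul_mul_assoc, mul_smul_comm, smul_add,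
    smul_sub, smul_smul, Complex.star_def, Complex.conj_I]
  ext i j
  simp only [Matrix.add_apply, Matrix.sub_apply, Matrix.smul_apply, smul_eq_mul]
  linear_combination (2 * K i j - 2 * Kᴴ i j) * Complex.I_mul_I

theorem aux_ind {k : ℕ} (S : Submodule ℂ (Matrix (Fin k) (Fin k) ℂ))
    (h : ∀ X : Matrix (Fin k) (Fin k) ℂ, X.PosSemidef → X ∈ S) (K : Matrix (Fin k) (Fin k) ℂ) :
    K ∈ S := by
  have h4 : (4 : ℂ) • K ∈ S := by
    rw [aux_polar K]
    refine S.add_mem (S.add_mem (S.sub_mem ?_ ?_) (S.smul_mem _ ?_)) (S.smul_mem _ ?_) <;>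
    exact h _ (posSemidef_conjTranspose_mul_self _)
  have := S.smul_mem (4 : ℂ)⁻¹ h4
  rwa [smul_smul, inv_mul_cancel₀ (by norm_num), one_smul] at this

theorem aux_fac {k : ℕ} {B : Matrix (Fin k) (Fin k) ℂ} (hB : B.PosSemidef) :
    ∃ C : Matrix (Fin k) (Fin k) ℂ, B = Cᴴ * C := by
  open scoped MatrixOrder in
  exact CStarAlgebra.nonneg_iff_eq_star_mul_self.mp hB.nonneg

theorem aux_zero {k : ℕ} {B E : Matrix (Fin k) (Fin k) ℂ} (hB : B.PosSemidef)
    (h : (B * (E * Eᴴ)).trace = 0) : B * E = 0 := by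
  obtain ⟨C, rfl⟩ := aux_fac hB
  have : ((C * E)ᴴ * (C * E)).trace = 0 := by
    rw [← h, conjTranspose_mul, ← mul_assoc (Cᴴ * C), trace_mul_comm _ Eᴴ]
    simp only [mul_assoc]
  rw [trace_conjTranspose_mul_self_eq_zero_iff] at this
  rw [mul_assoc, this, mul_zero]

theorem aux_pow_zero {k : ℕ} {A : Matrix (Fin k) (Fin k) ℂ} (hA : A.IsHermitian) :
    mpow A 0 = 1 := by
  have h1 : (hA.eigenvectorUnitary : Matrix (Fin k) (Fin k) ℂ) *
      (hA.eigenvectorUnitary : Matrix (Fin k) (Fin k) ℂ)ᴴ = 1 :=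
    Unitary.coe_mul_star_self hA.eigenvectorUnitary
  simp [mpow, hA, h1]

theorem aux_pinv {k : ℕ} {A : Matrix (Fin k) (Fin k) ℂ} (hA : A.IsHermitian) :
    (mpow A (-1))ᴴ = mpow A (-1) ∧ A * mpow A (-1) * A = A ∧
      mpow A (-1) * A * mpow A (-1) = mpow A (-1) ∧ A * mpow A (-1) = mpow A (-1) * A := by
  have h2 : (hA.eigenvectorUnitary : Matrix (Fin k) (Fin k) ℂ)ᴴ *
      (hA.eigenvectorUnitary : Matrix (Fin k) (Fin k) ℂ) = 1 :=
    Unitary.coe_star_mul_self hA.eigenvectorUnitary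
  have h3 : A = (hA.eigenvectorUnitary : Matrix (Fin k) (Fin k) ℂ) *
      diagonal (fun i => ((hA.eigenvalues i : ℝ) : ℂ)) *
      (hA.eigenvectorUnitary : Matrix (Fin k) (Fin k) ℂ)ᴴ := by
    have := hA.spectral_theorem
    rw [Unitary.conjStarAlgAut_apply] at this
    exact this
  have h4 : mpow A (-1) = (hA.eigenvectorUnitary : Matrix (Fin k) (Fin k) ℂ) *
      diagonal (fun i => ((hA.eigenvalues i : ℝ) : ℂ)⁻¹) *
      (hA.eigenvectorUnitary : Matrix (Fin k) (Fin k) ℂ)ᴴ := by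
    simp [mpow, hA, Real.rpow_neg_one]
  rw [h4]
  generalize (hA.eigenvectorUnitary : Matrix (Fin k) (Fin k) ℂ) = U at *
  generalize hA.eigenvalues = d at *
  have key : ∀ D D' : Matrix (Fin k) (Fin k) ℂ, U * D * Uᴴ * (U * D' * Uᴴ) = U * (D * D') * Uᴴ := by
    intro D D'
    calc _ = U * D * (Uᴴ * U) * D' * Uᴴ := by simp only [mul_assoc]
      _ = _ := by rw [h2]; simp only [mul_assoc, mul_one]
  clear h4
  subst h3
  refine ⟨?_, ?_, ?_, ?_⟩
  · simp only [conjTranspose_mul, conjTranspose_conjTranspose, diagonal_conjTranspose, mul_assoc]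
    congr 3
    ext i
    simp
  · rw [key, key, diagonal_mul_diagonal, diagonal_mul_diagonal]
    simp
  · rw [key, key, diagonal_mul_diagonal, diagonal_mul_diagonal]
    congr 4
    ext i
    by_cases h : (d i : ℂ) = 0
    · simp [h]
    · field_simp
  · rw [key, key, diagonal_mul_diagonal, diagonal_mul_diagonal]
    simp only [mul_comm]

theorem aux_psd {k : ℕ} {M : Matrix (Fin k) (Fin k) ℂ} (hM : M.IsHermitian)
    (h : ∀ Y : Matrix (Fin k) (Fin k) ℂ, Y.PosDef → 0 ≤ (M * Y).trace.re) : M.PosSemidef := by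
  refine .of_dotProduct_mulVec_nonneg hM fun x => ?_
  have him : (star x ⬝ᵥ (M *ᵥ x)).im = 0 := hM.im_star_dotProduct_mulVec_self x
  have hre : 0 ≤ (star x ⬝ᵥ (M *ᵥ x)).re := by
    have h1 : ∀ e : ℝ, 0 < e → 0 ≤ (star x ⬝ᵥ (M *ᵥ x)).re + e * M.trace.re := by
      intro e he
      have hY : (vecMulVec x (star x) + (e : ℂ) • (1 : Matrix (Fin k) (Fin k) ℂ)).PosDef :=
        PosDef.posSemidef_add (posSemidef_vecMulVec_self_star x)
          (PosDef.one.smul (by exact_mod_cast he))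
      have := h _ hY
      rw [mul_add, trace_add, mul_vecMulVec, trace_vecMulVec, dotProduct_comm, mul_smul_comm,
        mul_one, trace_smul, Complex.add_re, smul_eq_mul, Complex.re_ofReal_mul] at this
      exact this
    by_contra hneg
    push Not at hneg
    have h2 := h1 1 one_pos
    have hT : 0 < M.trace.re := by linarith
    have h3 := h1 (-(star x ⬝ᵥ (M *ᵥ x)).re / (2 * M.trace.re)) (by apply div_pos <;> linarith)
    have h4 : -(star x ⬝ᵥ (M *ᵥ x)).re / (2 * M.trace.re) * M.trace.re
      = -(star x ⬝ᵥ (M *ᵥ x)).re / 2 := by field_simp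
    linarith
  rw [Complex.nonneg_iff]
  exact ⟨hre, him.symm⟩

theorem stmt3 {n m : ℕ}
    (Φ : Matrix (Fin n) (Fin n) ℂ →ₗ[ℂ] Matrix (Fin m) (Fin m) ℂ)
    (Ψ : Matrix (Fin m) (Fin m) ℂ →ₗ[ℂ] Matrix (Fin n) (Fin n) ℂ)
    (hpos : IsPositiveMap Φ) (hadj : IsHSAdjoint Φ Ψ)
    (hineq : ∀ (t : ℝ), 0 ≤ t → t ≤ 1 →
      ∀ (X Y : Matrix (Fin m) (Fin m) ℂ), X.PosDef → Y.PosDef →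
      ∀ (K : Matrix (Fin m) (Fin m) ℂ),
        (Ψ Kᴴ * mpow (Ψ Y) (t - 1) * Ψ K * mpow (Ψ X) (-t)).trace.re ≤
          (Kᴴ * mpow Y (t - 1) * K * mpow X (-t)).trace.re) :
    IsSchwarz Φ := by
  have hΦH : ∀ K, Φ Kᴴ = (Φ K)ᴴ := by
    intro K
    have h4 : (4 : ℂ) • Φ Kᴴ = (4 : ℂ) • (Φ K)ᴴ := by
      have e1 : (4 : ℂ) • Φ Kᴴ = Φ ((4 : ℂ) • K)ᴴ := by
        rw [conjTranspose_smul, map_smul]; simp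
      have e2 : (4 : ℂ) • (Φ K)ᴴ = (Φ ((4 : ℂ) • K))ᴴ := by
        rw [map_smul, conjTranspose_smul]; simp
      rw [e1, e2, aux_polar K]
      have p1 := posSemidef_conjTranspose_mul_self (1 + K)
      have p2 := posSemidef_conjTranspose_mul_self (1 - K)
      have p3 := posSemidef_conjTranspose_mul_self (1 + Complex.I • K)
      have p4 := posSemidef_conjTranspose_mul_self (1 - Complex.I • K)
      generalize (1 + K)ᴴ * (1 + K) = P1 at *
      generalize (1 - K)ᴴ * (1 - K) = P2 at *
      generalize (1 + Complex.I • K)ᴴ * (1 + Complex.I • K) = P3 at *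
      generalize (1 - Complex.I • K)ᴴ * (1 - Complex.I • K) = P4 at *
      simp only [conjTranspose_add, conjTranspose_sub, conjTranspose_smul, map_add, map_sub,
        map_smul, p1.1.eq, p2.1.eq, p3.1.eq, p4.1.eq, (hpos _ p1).1.eq, (hpos _ p2).1.eq,
        (hpos _ p3).1.eq, (hpos _ p4).1.eq]
    exact smul_right_injective _ (by norm_num : (4 : ℂ) ≠ 0) h4
  have hΨH : ∀ K, Ψ Kᴴ = (Ψ K)ᴴ := by
    intro K
    have : (Ψ Kᴴ)ᴴ = Ψ K := by
      rw [Matrix.ext_iff_trace_mul_right]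
      intro Y
      rw [← hadj, conjTranspose_conjTranspose]
      have h1 := congrArg star (hadj K Yᴴ)
      rw [← trace_conjTranspose, ← trace_conjTranspose, hΦH, conjTranspose_mul, conjTranspose_mul] at h1
      simp only [conjTranspose_conjTranspose] at h1
      rw [trace_mul_comm, h1, trace_mul_comm]
    rw [← this, conjTranspose_conjTranspose]
  have hadj' : ∀ X Y, (Ψ X * Y).trace = (X * Φ Y).trace := by
    intro X Y
    have := hadj Xᴴ Y
    rw [hΨH, conjTranspose_conjTranspose, conjTranspose_conjTranspose] at this
    exact this.symm
  have htr : ∀ {X Z : Matrix (Fin m) (Fin m) ℂ}, X.PosSemidef → Z.PosSemidef →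
      0 ≤ (X * Z).trace := by
    intro X Z hX hZ
    obtain ⟨C, rfl⟩ := aux_fac hX
    have := (hZ.mul_mul_conjTranspose_same C).trace_nonneg
    rwa [trace_mul_comm, ← mul_assoc] at this
  have hΨpos : ∀ X, X.PosSemidef → (Ψ X).PosSemidef := by
    intro X hX
    refine .of_dotProduct_mulVec_nonneg ?_ fun x => ?_
    · have := hΨH X
      rw [hX.1.eq] at this
      exact this.symm
    · have := htr hX (hpos _ (posSemidef_vecMulVec_self_star x))
      rwa [← hadj', mul_vecMulVec, trace_vecMulVec, dotProduct_comm] at this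
  have hker : ∀ Y : Matrix (Fin m) (Fin m) ℂ, Y.PosDef → ∀ E, Ψ Y * E = 0 → ∀ K, Ψ K * E = 0 := by
    intro Y hY E hE K
    have hP : Φ (E * Eᴴ) = 0 := by
      have h1 : (Y * Φ (E * Eᴴ)).trace = 0 := by
        rw [← hadj', ← mul_assoc, hE]; simp
      obtain ⟨C, hC⟩ := aux_fac (hpos _ (posSemidef_self_mul_conjTranspose E))
      have h2 : Y * Cᴴ = 0 := by
        apply aux_zero hY.posSemidef
        rw [conjTranspose_conjTranspose, ← hC, h1]
      have h3 : Cᴴ = 0 := hY.isUnit.mul_right_eq_zero.mp h2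
      rw [hC, h3, zero_mul]
    let S : Submodule ℂ (Matrix (Fin m) (Fin m) ℂ) :=
      LinearMap.ker ((LinearMap.mulRight ℂ E).comp Ψ)
    have : K ∈ S := by
      apply aux_ind
      intro X hX
      simp only [S, LinearMap.mem_ker, LinearMap.comp_apply, LinearMap.mulRight_apply]
      apply aux_zero (hΨpos X hX)
      rw [hadj', hP]; simp
    simpa only [S, LinearMap.mem_ker, LinearMap.comp_apply, LinearMap.mulRight_apply] using this
  intro L
  apply aux_psd
  · exact ((hpos _ (posSemidef_conjTranspose_mul_self L)).1).sub
      (posSemidef_conjTranspose_mul_self (Φ L)).1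
  intro Y hY
  have hA := hΨpos Y hY.posSemidef
  obtain ⟨hB1, hB2, hB3, hB4⟩ := aux_pinv hA.1
  obtain ⟨hC1, hC2, hC3, hC4⟩ := aux_pinv hY.1
  have hYi : mpow Y (-1) * Y = 1 := by
    apply hY.isUnit.mul_left_cancel
    rw [← mul_assoc, hC2, mul_one]
  have hI := hineq 0 le_rfl zero_le_one 1 Y PosDef.one hY (Φ L * Y)ᴴ
  rw [neg_zero, zero_sub, aux_pow_zero (hΨpos 1 PosSemidef.one).1,
    aux_pow_zero PosDef.one.1, mul_one, mul_one, conjTranspose_conjTranspose, hΨH] at hI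
  generalize hK : Ψ (Φ L * Y) = T at hI
  have hT : T * (mpow (Ψ Y) (-1) * Ψ Y) = T := by
    have := hker Y hY (1 - mpow (Ψ Y) (-1) * Ψ Y)
      (by rw [mul_sub, mul_one, ← mul_assoc, hB2, sub_self]) (Φ L * Y)
    rw [hK, mul_sub, mul_one, sub_eq_zero] at this
    exact this.symm
  -- the right-hand side
  have hR : (Φ L * Y * mpow Y (-1) * (Φ L * Y)ᴴ).trace = ((Φ L)ᴴ * Φ L * Y).trace := by
    rw [mul_assoc (Φ L), hC4, hYi, mul_one, conjTranspose_mul, hY.1.eq, trace_mul_comm,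
      mul_assoc, trace_mul_comm]
  rw [hR] at hI
  have hcross : (T * Lᴴ).trace.re = ((Φ L)ᴴ * Φ L * Y).trace.re := by
    rw [← hK, hadj', hΦH, trace_mul_comm, ← mul_assoc]
  have hcross' : (L * Tᴴ).trace.re = ((Φ L)ᴴ * Φ L * Y).trace.re := by
    rw [← hcross]
    have : L * Tᴴ = (T * Lᴴ)ᴴ := by simp
    rw [this, trace_conjTranspose]
    simp
  have hmain : (Φ (Lᴴ * L) * Y).trace = (L * Ψ Y * Lᴴ).trace := by
    rw [trace_mul_comm, ← hadj', ← mul_assoc, trace_mul_comm, ← mul_assoc]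
  generalize hBd : mpow (Ψ Y) (-1) = B at *
  have hsq := (hA.mul_mul_conjTranspose_same (L - T * B)).trace_nonneg
  have hexp : (L - T * B) * Ψ Y * (L - T * B)ᴴ
      = L * Ψ Y * Lᴴ - T * Lᴴ - L * Tᴴ + T * B * Tᴴ := by
    have hT' : Ψ Y * (B * Tᴴ) = Tᴴ := by
      have := congrArg conjTranspose hT
      simpa only [conjTranspose_mul, hB1, hA.1.eq, mul_assoc] using this
    rw [conjTranspose_sub, conjTranspose_mul, hB1, sub_mul, mul_assoc T B, hT, mul_sub, sub_mul,
      sub_mul, mul_assoc L (Ψ Y) (B * Tᴴ), hT', mul_assoc T B]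
    abel
  rw [hexp] at hsq
  have hsq' := (Complex.nonneg_iff.mp hsq).1
  simp only [trace_add, trace_sub, Complex.add_re, Complex.sub_re] at hsq'
  rw [sub_mul, trace_sub, Complex.sub_re, hmain]
  linarith
end

section
/- Let 0 < p ≤ 1 and let Φ : M_m(ℂ) → M_n(ℂ) be a unital Schwarz map. Then for every positive definite A ∈ M_n(ℂ) and every B ∈ M_m(ℂ), tr[(Φ(B)* A^p Φ(B))^{1/p}] ≤ tr[(B* Φ†(A)^p B)^{1/p}]. -/
open Matrix
open scoped ComplexOrder

section helpers

open MeasureTheory Set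

lemma sw_integrand {p : ℝ} (hp : p ∈ Ioo (0:ℝ) 1) {t a c : ℝ} (ht : 0 < t) (ha : 0 ≤ a)
    (hc : 0 ≤ c) :
    c * Real.rpowIntegrand₀₁ p t (a / c) = t ^ (p - 1) * (a * c / (a + t * c)) := by
  rw [Real.rpowIntegrand₀₁_eq_pow_div hp ht.le (by positivity)]
  rcases hc.eq_or_lt with rfl | hc
  · simp
  · have : 0 < a + t * c := by positivity
    have h2 : 0 < t + a / c := by positivity
    have h3 : t + a / c = (a + t * c) / c := by field_simp; ring
    rw [h3]
    field_simp

lemma sw_value {p : ℝ} (hp : p ∈ Ioo (0:ℝ) 1) {a c : ℝ} (ha : 0 ≤ a) (hc : 0 ≤ c) :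
    c * (a / c) ^ p = a ^ p * c ^ (1 - p) := by
  rcases hc.eq_or_lt with rfl | hc
  · rw [Real.zero_rpow (by linarith [hp.2])]; simp
  · rw [Real.div_rpow ha hc.le, Real.rpow_sub hc, Real.rpow_one]
    ring

lemma sw_split_le {α γ t : ℝ} (hα : 0 ≤ α) (hγ : 0 ≤ γ) (ht : 0 < t) (y z : ℂ) :
    t * (α * γ / (α + t * γ)) * Complex.normSq (y + z) ≤
      α * Complex.normSq y + t * γ * Complex.normSq z := by
  have hs : 0 ≤ α + t * γ := by positivity
  rcases hs.eq_or_lt with h | h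
  · rw [← h]; simp
    have := Complex.normSq_nonneg y
    have := Complex.normSq_nonneg z
    positivity
  · rw [show t * (α * γ / (α + t * γ)) * Complex.normSq (y + z) =
      (t * α * γ * Complex.normSq (y + z)) / (α + t * γ) by ring, div_le_iff₀ h]
    simp only [Complex.normSq_apply, Complex.add_re, Complex.add_im]
    nlinarith [sq_nonneg (α * y.re - t * γ * z.re), sq_nonneg (α * y.im - t * γ * z.im)]

lemma sw_split_eq {a c t : ℝ} (ha : 0 ≤ a) (hc : 0 ≤ c) (ht : 0 < t) (x : ℂ) :
    a * Complex.normSq (((t * c / (a + t * c) : ℝ) : ℂ) * x) +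
      t * c * Complex.normSq (x - ((t * c / (a + t * c) : ℝ) : ℂ) * x) =
    t * (a * c / (a + t * c)) * Complex.normSq x := by
  have hs : 0 ≤ a + t * c := by positivity
  have e : x - ((t * c / (a + t * c) : ℝ) : ℂ) * x = ((1 - t * c / (a + t * c) : ℝ) : ℂ) * x := by
    push_cast; ring
  rw [e]
  simp only [Complex.normSq_mul, Complex.normSq_ofReal]
  rcases hs.eq_or_lt with h | h
  · have h1 : a = 0 := by nlinarith [mul_nonneg ht.le hc]
    have h2 : t * c = 0 := by linarith
    simp [h1, h2]
  · field_simp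
    ring

lemma sw_intg {σ : Type*} [Fintype σ] {p : ℝ} (hp : p ∈ Ioo (0:ℝ) 1) (a c : σ → ℝ) (w : σ → ℂ)
    (ha : ∀ i, 0 ≤ a i) (hc : ∀ i, 0 ≤ c i) :
    IntegrableOn (fun t => ∑ i, c i * Complex.normSq (w i) *
        Real.rpowIntegrand₀₁ p t (a i / c i)) (Ioi 0) := by
  refine integrable_finsetSum _ fun i _ => Integrable.const_mul ?_ _
  exact Real.integrableOn_rpowIntegrand₀₁_Ioi hp (div_nonneg (ha i) (hc i))

lemma sw_int_val {σ : Type*} [Fintype σ] {p : ℝ} (hp : p ∈ Ioo (0:ℝ) 1) (a c : σ → ℝ) (w : σ → ℂ)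
    (ha : ∀ i, 0 ≤ a i) (hc : ∀ i, 0 ≤ c i) :
    (∫ t in Ioi (0:ℝ), ∑ i, c i * Complex.normSq (w i) * Real.rpowIntegrand₀₁ p t (a i / c i)) =
      (∑ i, a i ^ p * c i ^ (1 - p) * Complex.normSq (w i)) *
        ∫ t in Ioi (0:ℝ), Real.rpowIntegrand₀₁ p t 1 := by
  rw [integral_finsetSum _ fun i _ => Integrable.const_mul
    (Real.integrableOn_rpowIntegrand₀₁_Ioi hp (div_nonneg (ha i) (hc i))) _, Finset.sum_mul]
  refine Finset.sum_congr rfl fun i _ => ?_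
  rw [integral_const_mul, Real.integral_rpowIntegrand₀₁_eq_rpow_mul_const hp
    (div_nonneg (ha i) (hc i)), ← sw_value hp (ha i) (hc i)]
  ring

/-- Stein-Weiss interpolation of weighted l2 spaces. -/
lemma stein_weiss {ι κ : Type*} [Fintype ι] [Fintype κ] {p : ℝ} (hp0 : 0 < p) (hp1 : p ≤ 1)
    (T : (ι → ℂ) → (κ → ℂ)) (hT : ∀ x y, T (x + y) = T x + T y)
    (a c : ι → ℝ) (α γ : κ → ℝ) (ha : ∀ i, 0 ≤ a i) (hc : ∀ i, 0 ≤ c i)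
    (hα : ∀ i, 0 ≤ α i) (hγ : ∀ i, 0 ≤ γ i)
    (h1 : ∀ x, ∑ k, α k * Complex.normSq (T x k) ≤ ∑ i, a i * Complex.normSq (x i))
    (h2 : ∀ x, ∑ k, γ k * Complex.normSq (T x k) ≤ ∑ i, c i * Complex.normSq (x i))
    (x : ι → ℂ) :
    ∑ k, α k ^ p * γ k ^ (1 - p) * Complex.normSq (T x k) ≤
      ∑ i, a i ^ p * c i ^ (1 - p) * Complex.normSq (x i) := by
  rcases hp1.eq_or_lt with rfl | hp1
  · simpa using h1 x
  have hp : p ∈ Ioo (0:ℝ) 1 := ⟨hp0, hp1⟩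
  have key : ∀ t : ℝ, 0 < t →
      ∑ k, t * (α k * γ k / (α k + t * γ k)) * Complex.normSq (T x k) ≤
      ∑ i, t * (a i * c i / (a i + t * c i)) * Complex.normSq (x i) := by
    intro t ht
    set y : ι → ℂ := fun i => ((t * c i / (a i + t * c i) : ℝ) : ℂ) * x i with hy
    set z : ι → ℂ := fun i => x i - ((t * c i / (a i + t * c i) : ℝ) : ℂ) * x i with hz
    have hx : x = y + z := by ext i; simp [hy, hz]
    have e1 : ∀ k, T x k = T y k + T z k := by
      intro k; conv_lhs => rw [hx, hT]
      rfl
    calc _ ≤ ∑ k, (α k * Complex.normSq (T y k) + t * γ k * Complex.normSq (T z k)) := by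
          refine Finset.sum_le_sum fun k _ => ?_
          rw [e1]; exact sw_split_le (hα k) (hγ k) ht _ _
      _ = ∑ k, α k * Complex.normSq (T y k) + t * ∑ k, γ k * Complex.normSq (T z k) := by
          rw [Finset.sum_add_distrib, Finset.mul_sum]; simp only [mul_assoc]
      _ ≤ ∑ i, a i * Complex.normSq (y i) + t * ∑ i, c i * Complex.normSq (z i) := by
          have := h1 y
          have := mul_le_mul_of_nonneg_left (h2 z) ht.le
          linarith
      _ = ∑ i, (a i * Complex.normSq (y i) + t * c i * Complex.normSq (z i)) := by
          rw [Finset.sum_add_distrib, Finset.mul_sum]; simp only [mul_assoc]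
      _ = _ := Finset.sum_congr rfl fun i _ => sw_split_eq (ha i) (hc i) ht _
  have mono : (∫ t in Ioi (0:ℝ), ∑ k, γ k * Complex.normSq (T x k) *
      Real.rpowIntegrand₀₁ p t (α k / γ k)) ≤ ∫ t in Ioi (0:ℝ), ∑ i, c i * Complex.normSq (x i) *
      Real.rpowIntegrand₀₁ p t (a i / c i) := by
    refine setIntegral_mono_on (sw_intg hp α γ _ hα hγ) (sw_intg hp a c _ ha hc)
      measurableSet_Ioi fun t ht => ?_
    have ht : 0 < t := ht
    have e2 : ∀ (a c w : ℝ), 0 ≤ a → 0 ≤ c → c * w * Real.rpowIntegrand₀₁ p t (a / c) =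
        t ^ (p - 1) * t⁻¹ * (t * (a * c / (a + t * c)) * w) := by
      intro a c w ha hc
      rw [mul_right_comm, sw_integrand hp ht ha hc]
      field_simp
    rw [Finset.sum_congr rfl fun k _ => e2 _ _ _ (hα k) (hγ k),
      Finset.sum_congr rfl fun i _ => e2 _ _ _ (ha i) (hc i), ← Finset.mul_sum, ← Finset.mul_sum]
    exact mul_le_mul_of_nonneg_left (key t ht) (by positivity)
  rw [sw_int_val hp α γ _ hα hγ, sw_int_val hp a c _ ha hc] at mono
  exact le_of_mul_le_mul_right mono (Real.integral_rpowIntegrand₀₁_one_pos hp)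


lemma tr_conj {m n : ℕ} (D : Matrix (Fin m) (Fin n) ℂ) (U : Matrix (Fin m) (Fin m) ℂ)
    (V : Matrix (Fin n) (Fin n) ℂ) (f : Fin m → ℝ) (g : Fin n → ℝ) :
    (Dᴴ * (U * diagonal (fun i => (f i : ℂ)) * Uᴴ) * D *
      (V * diagonal (fun i => (g i : ℂ)) * Vᴴ)).trace =
    ((∑ k, ∑ l, f k * g l * Complex.normSq ((Uᴴ * D * V) k l) : ℝ) : ℂ) := by
  have e : (Dᴴ * (U * diagonal (fun i => (f i : ℂ)) * Uᴴ) * D *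
      (V * diagonal (fun i => (g i : ℂ)) * Vᴴ)).trace =
      (diagonal (fun i => (g i : ℂ)) * ((Uᴴ * D * V)ᴴ * (diagonal (fun i => (f i : ℂ)) *
        (Uᴴ * D * V)))).trace := by
    rw [← Matrix.mul_assoc, ← Matrix.mul_assoc, Matrix.trace_mul_comm]
    simp only [conjTranspose_mul, conjTranspose_conjTranspose, Matrix.mul_assoc]
    conv_rhs => rw [Matrix.trace_mul_comm]
    simp only [Matrix.mul_assoc]
  rw [e, Matrix.trace]
  simp only [diag_apply, diagonal_mul]
  push_cast
  rw [Finset.sum_comm]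
  refine Finset.sum_congr rfl fun l _ => ?_
  rw [Matrix.mul_apply, Finset.mul_sum]
  refine Finset.sum_congr rfl fun k _ => ?_
  rw [diagonal_mul, conjTranspose_apply, Complex.normSq_eq_conj_mul_self]
  simp only [Complex.star_def]
  ring

open scoped MatrixOrder in
lemma psd_factor {n : ℕ} {A : Matrix (Fin n) (Fin n) ℂ} (hA : A.PosSemidef) :
    ∃ C : Matrix (Fin n) (Fin n) ℂ, A = Cᴴ * C := by
  obtain ⟨C, h⟩ := CStarAlgebra.nonneg_iff_eq_star_mul_self.mp hA.nonneg
  exact ⟨C, h⟩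

lemma tr_psd {n : ℕ} {A P : Matrix (Fin n) (Fin n) ℂ} (hA : A.PosSemidef) (hP : P.PosSemidef) :
    0 ≤ (A * P).trace := by
  obtain ⟨C, rfl⟩ := psd_factor hA
  rw [Matrix.mul_assoc, Matrix.trace_mul_comm]
  exact (hP.mul_mul_conjTranspose_same C).trace_nonneg

section maps
variable {m n : ℕ} {Φ : Matrix (Fin m) (Fin m) ℂ →ₗ[ℂ] Matrix (Fin n) (Fin n) ℂ}
    {Ψ : Matrix (Fin n) (Fin n) ℂ →ₗ[ℂ] Matrix (Fin m) (Fin m) ℂ}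

lemma schwarz_pos (hΦ : IsSchwarz Φ) (K : Matrix (Fin m) (Fin m) ℂ) :
    (Φ (Kᴴ * K)).PosSemidef := by
  have := (hΦ K).add (posSemidef_conjTranspose_mul_self (Φ K))
  simpa using this

lemma schwarz_herm (hΦ : IsSchwarz Φ) (K : Matrix (Fin m) (Fin m) ℂ) :
    (Φ K)ᴴ = Φ Kᴴ := by
  have h0 := (schwarz_pos hΦ K).1
  have h1 := (schwarz_pos hΦ 1).1
  have h2 := (schwarz_pos hΦ (1 + K)).1
  have h3 := (schwarz_pos hΦ (1 + Complex.I • K)).1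
  unfold Matrix.IsHermitian at *
  simp only [conjTranspose_add, conjTranspose_smul, conjTranspose_one, add_mul, mul_add, one_mul,
    mul_one, map_add, map_smul, h0, smul_mul_assoc, mul_smul_comm, Complex.star_def,
    Complex.conj_I] at h1 h2 h3
  rw [h1] at h2 h3
  ext i j
  have h2' := congrFun (congrFun h2 i) j
  have h3' := congrFun (congrFun h3 i) j
  simp only [Matrix.add_apply, Matrix.smul_apply, smul_eq_mul, map_neg, Complex.conj_I,
    neg_neg, neg_mul] at h2' h3'
  have hI := Complex.I_mul_I
  linear_combination (1/2) * h2' + (Complex.I/2) * h3' +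
    (1/2) * ((Φ K)ᴴ i j - (Φ Kᴴ)ᴴ i j + Φ K i j - Φ Kᴴ i j) * hI

lemma adj_psd (hΦ : IsSchwarz Φ) (hadj : IsHSAdjoint Φ Ψ) {A : Matrix (Fin n) (Fin n) ℂ}
    (hA : A.PosSemidef) : (Ψ A).PosSemidef := by
  have hH : (Ψ A)ᴴ = Ψ A := by
    rw [Matrix.ext_iff_trace_mul_right]
    intro Y
    have h1 := hadj A Y
    have h2 := hadj A Yᴴ
    rw [← schwarz_herm hΦ, hA.1.eq] at h2
    rw [hA.1.eq] at h1
    have h3 := congrArg star h2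
    rw [← Matrix.trace_conjTranspose, ← Matrix.trace_conjTranspose] at h3
    simp only [conjTranspose_mul, conjTranspose_conjTranspose, hA.1.eq] at h3
    rw [← h1, Matrix.trace_mul_comm A, h3, Matrix.trace_mul_comm]
  refine .of_dotProduct_mulVec_nonneg hH fun x => ?_
  have h1 := hadj A (vecMulVec x (star x))
  rw [hA.1.eq, hH] at h1
  have h2 : star x ⬝ᵥ Ψ A *ᵥ x = (Ψ A * vecMulVec x (star x)).trace := by
    rw [mul_vecMulVec, trace_vecMulVec, dotProduct_comm]
  rw [h2, ← h1]
  refine tr_psd hA ?_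
  obtain ⟨K, hK⟩ := psd_factor (posSemidef_vecMulVec_self_star x)
  rw [hK]
  exact schwarz_pos hΦ K

lemma adj_tr (hunital : Φ 1 = 1) (hadj : IsHSAdjoint Φ Ψ) {A : Matrix (Fin n) (Fin n) ℂ}
    (hA : A.IsHermitian) (hA' : (Ψ A).IsHermitian) : (Ψ A).trace = A.trace := by
  have := hadj A 1
  rw [hunital, hA.eq, hA'.eq] at this
  simpa using this.symm

lemma schwarz_left (hΦ : IsSchwarz Φ) (hadj : IsHSAdjoint Φ Ψ) {A : Matrix (Fin n) (Fin n) ℂ}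
    (hA : A.PosSemidef) (X : Matrix (Fin m) (Fin m) ℂ) :
    ((Φ X)ᴴ * A * Φ X).trace ≤ (Xᴴ * Ψ A * X).trace := by
  have h := tr_psd hA (hΦ Xᴴ)
  have h1 := hadj A (X * Xᴴ)
  rw [hA.1.eq, (adj_psd hΦ hadj hA).1.eq] at h1
  rw [mul_sub, trace_sub, schwarz_herm hΦ, conjTranspose_conjTranspose, h1, ← schwarz_herm hΦ,
    sub_nonneg] at h
  rw [Matrix.mul_assoc, Matrix.trace_mul_comm, Matrix.mul_assoc Xᴴ, Matrix.trace_mul_comm Xᴴ,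
    Matrix.mul_assoc, Matrix.mul_assoc]
  exact h

lemma schwarz_right (hΦ : IsSchwarz Φ) (hadj : IsHSAdjoint Φ Ψ) {A : Matrix (Fin n) (Fin n) ℂ}
    (hA : A.PosSemidef) (X : Matrix (Fin m) (Fin m) ℂ) :
    ((Φ X)ᴴ * Φ X * A).trace ≤ (Xᴴ * X * Ψ A).trace := by
  have h := tr_psd hA (hΦ X)
  have h1 := hadj A (Xᴴ * X)
  rw [hA.1.eq, (adj_psd hΦ hadj hA).1.eq] at h1
  rw [mul_sub, trace_sub, h1, sub_nonneg] at h
  rw [Matrix.trace_mul_comm, Matrix.trace_mul_comm _ (Ψ A)]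
  exact h

lemma psd_conj {k : ℕ} (U : Matrix (Fin k) (Fin k) ℂ) (f : Fin k → ℝ) (hf : ∀ i, 0 ≤ f i) :
    (U * diagonal (fun i => (f i : ℂ)) * Uᴴ).PosSemidef := by
  refine Matrix.PosSemidef.mul_mul_conjTranspose_same (PosSemidef.diagonal fun i => ?_) U
  simpa using hf i

lemma lieb_mono (hΦ : IsSchwarz Φ) (hadj : IsHSAdjoint Φ Ψ) {p : ℝ} (hp0 : 0 < p) (hp1 : p ≤ 1)
    (U V : Matrix (Fin n) (Fin n) ℂ) (U' V' : Matrix (Fin m) (Fin m) ℂ)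
    (hU : U * Uᴴ = 1) (hV : V * Vᴴ = 1) (hU' : U' * U'ᴴ = 1) (hV' : V' * V'ᴴ = 1)
    (α γ : Fin n → ℝ) (a c : Fin m → ℝ)
    (hα : ∀ i, 0 ≤ α i) (hγ : ∀ i, 0 ≤ γ i) (ha : ∀ i, 0 ≤ a i) (hc : ∀ i, 0 ≤ c i)
    (hA : Ψ (U * diagonal (fun i => (α i : ℂ)) * Uᴴ) = U' * diagonal (fun i => (a i : ℂ)) * U'ᴴ)
    (hC : Ψ (V * diagonal (fun i => (γ i : ℂ)) * Vᴴ) = V' * diagonal (fun i => (c i : ℂ)) * V'ᴴ)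
    (B : Matrix (Fin m) (Fin m) ℂ) :
    ∑ k, ∑ l, α k ^ p * γ l ^ (1 - p) * Complex.normSq ((Uᴴ * Φ B * V) k l) ≤
    ∑ k, ∑ l, a k ^ p * c l ^ (1 - p) * Complex.normSq ((U'ᴴ * B * V') k l) := by
  have hU2 : U'ᴴ * U' = 1 := mul_eq_one_comm.mp hU'
  have hV2 : V'ᴴ * V' = 1 := mul_eq_one_comm.mp hV'
  let S : (Fin m × Fin m → ℂ) → Matrix (Fin m) (Fin m) ℂ := fun f =>
    U' * Matrix.of (fun i j => f (i, j)) * V'ᴴ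
  have hS : ∀ f i j, (U'ᴴ * S f * V') i j = f (i, j) := by
    intro f i j
    have : U'ᴴ * S f * V' = (U'ᴴ * U') * Matrix.of (fun i j => f (i, j)) * (V'ᴴ * V') := by
      simp only [S, Matrix.mul_assoc]
    rw [this, hU2, hV2]; simp
  have hSadd : ∀ f g, S (f + g) = S f + S g := by
    intro f g
    simp only [S, ← add_mul, ← mul_add]
    rfl
  have hone : ∀ {k : ℕ} (W : Matrix (Fin k) (Fin k) ℂ), W * Wᴴ = 1 →
      W * Matrix.diagonal (fun _ => ((1 : ℝ) : ℂ)) * Wᴴ = 1 := by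
    intro k W hW; simp [hW]
  have := stein_weiss (ι := Fin m × Fin m) (κ := Fin n × Fin n) hp0 hp1
    (fun f kl => (Uᴴ * Φ (S f) * V) kl.1 kl.2)
    (by intro f g; ext kl; simp [hSadd, mul_add, add_mul])
    (fun i => a i.1) (fun i => c i.2) (fun i => α i.1) (fun i => γ i.2)
    (fun i => ha _) (fun i => hc _) (fun i => hα _) (fun i => hγ _)
    (by
      intro f
      have h := schwarz_left hΦ hadj (psd_conj U α hα) (S f)
      have e1 := tr_conj (Φ (S f)) U V α (fun _ => 1)
      have e2 := tr_conj (S f) U' V' a (fun _ => 1)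
      rw [hone V hV, mul_one] at e1
      rw [hone V' hV', mul_one] at e2
      rw [hA, e1, e2, Complex.real_le_real] at h
      simp only [Fintype.sum_prod_type]
      simpa [hS] using h)
    (by
      intro f
      have h := schwarz_right hΦ hadj (psd_conj V γ hγ) (S f)
      have e1 := tr_conj (Φ (S f)) U V (fun _ => 1) γ
      have e2 := tr_conj (S f) U' V' (fun _ => 1) c
      rw [hone U hU, mul_one] at e1
      rw [hone U' hU', mul_one] at e2
      rw [hC, e1, e2, Complex.real_le_real] at h
      simp only [Fintype.sum_prod_type]
      simpa [hS] using h)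
    (fun ij => (U'ᴴ * B * V') ij.1 ij.2)
  have hB : S (fun ij => (U'ᴴ * B * V') ij.1 ij.2) = B := by
    have : S (fun ij => (U'ᴴ * B * V') ij.1 ij.2) = (U' * U'ᴴ) * B * (V' * V'ᴴ) := by
      have h0 : Matrix.of (fun i j => (U'ᴴ * B * V') i j) = U'ᴴ * B * V' := rfl
      simp only [S, h0]
      simp only [Matrix.mul_assoc]
    rw [this, hU', hV']; simp
  simp only [Fintype.sum_prod_type, hB] at this
  exact this

lemma herm_spec {k : ℕ} {A : Matrix (Fin k) (Fin k) ℂ} (hA : A.IsHermitian) :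
    A = (hA.eigenvectorUnitary : Matrix (Fin k) (Fin k) ℂ) *
      diagonal (fun i => (hA.eigenvalues i : ℂ)) *
      (hA.eigenvectorUnitary : Matrix (Fin k) (Fin k) ℂ)ᴴ := by
  conv_lhs => rw [hA.spectral_theorem, Unitary.conjStarAlgAut_apply]
  rfl

lemma herm_unit {k : ℕ} {A : Matrix (Fin k) (Fin k) ℂ} (hA : A.IsHermitian) :
    (hA.eigenvectorUnitary : Matrix (Fin k) (Fin k) ℂ) *
      (hA.eigenvectorUnitary : Matrix (Fin k) (Fin k) ℂ)ᴴ = 1 :=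
  Unitary.coe_mul_star_self hA.eigenvectorUnitary

lemma tr_unit {k : ℕ} (U : Matrix (Fin k) (Fin k) ℂ) (hU : U * Uᴴ = 1) (f : Fin k → ℝ) :
    (U * diagonal (fun i => (f i : ℂ)) * Uᴴ).trace = ((∑ i, f i : ℝ) : ℂ) := by
  rw [Matrix.trace_mul_comm, ← Matrix.mul_assoc, mul_eq_one_comm.mp hU, one_mul]
  simp [Matrix.trace]

lemma young_tr {k : ℕ} {p : ℝ} (hp0 : 0 < p) (hp1 : p ≤ 1)
    (W V : Matrix (Fin k) (Fin k) ℂ) (hW : W * Wᴴ = 1) (hV : V * Vᴴ = 1) (y c : Fin k → ℝ)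
    (hy : ∀ i, 0 ≤ y i) (hc : ∀ i, 0 ≤ c i) :
    ∑ i, ∑ j, y i * c j ^ (1 - p) * Complex.normSq ((Wᴴ * (1 : Matrix (Fin k) (Fin k) ℂ) * V) i j) ≤
      p * ∑ i, y i ^ (1 / p) + (1 - p) * ∑ j, c j := by
  have hone : ∀ {k : ℕ} (W : Matrix (Fin k) (Fin k) ℂ), W * Wᴴ = 1 →
      W * Matrix.diagonal (fun _ => ((1 : ℝ) : ℂ)) * Wᴴ = 1 := by
    intro k W hW; simp [hW]
  have e1 := tr_conj (1 : Matrix (Fin k) (Fin k) ℂ) W V (fun i => y i ^ (1 / p)) (fun _ => 1)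
  have e2 := tr_conj (1 : Matrix (Fin k) (Fin k) ℂ) W V (fun _ => 1) c
  rw [hone V hV, mul_one, mul_one, conjTranspose_one, one_mul, tr_unit W hW,
    Complex.ofReal_inj] at e1
  rw [hone W hW, mul_one, mul_one, conjTranspose_one, one_mul, tr_unit V hV,
    Complex.ofReal_inj] at e2
  rw [e1, e2, Finset.mul_sum, Finset.mul_sum, ← Finset.sum_add_distrib]
  refine Finset.sum_le_sum fun i _ => ?_
  rw [Finset.mul_sum, Finset.mul_sum, ← Finset.sum_add_distrib]
  refine Finset.sum_le_sum fun j _ => ?_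
  have h := Real.geom_mean_le_arith_mean2_weighted hp0.le (sub_nonneg.mpr hp1)
    (Real.rpow_nonneg (hy i) (1 / p)) (hc j) (by ring)
  rw [← Real.rpow_mul (hy i), one_div_mul_cancel hp0.ne', Real.rpow_one] at h
  have := mul_le_mul_of_nonneg_right h (Complex.normSq_nonneg ((Wᴴ * (1 : Matrix (Fin k) (Fin k) ℂ) * V) i j))
  linarith

end maps

end helpers

theorem stmt4 {m n : ℕ} (p : ℝ) (hp0 : 0 < p) (hp1 : p ≤ 1)
    (Φ : Matrix (Fin m) (Fin m) ℂ →ₗ[ℂ] Matrix (Fin n) (Fin n) ℂ)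
    (Ψ : Matrix (Fin n) (Fin n) ℂ →ₗ[ℂ] Matrix (Fin m) (Fin m) ℂ)
    (hΦ : IsSchwarz Φ) (hunital : Φ 1 = 1) (hadj : IsHSAdjoint Φ Ψ)
    (A : Matrix (Fin n) (Fin n) ℂ) (hA : A.PosDef)
    (B : Matrix (Fin m) (Fin m) ℂ) :
    (mpow ((Φ B)ᴴ * mpow A p * Φ B) (1 / p)).trace.re ≤
      (mpow (Bᴴ * mpow (Ψ A) p * B) (1 / p)).trace.re := by
  have hA0 := hA.posSemidef
  have hA' := adj_psd hΦ hadj hA0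
  have mp : ∀ {k : ℕ} {M : Matrix (Fin k) (Fin k) ℂ} (h : M.IsHermitian) (q : ℝ), mpow M q =
      (h.eigenvectorUnitary : Matrix (Fin k) (Fin k) ℂ) *
      Matrix.diagonal (fun i => ((h.eigenvalues i ^ q : ℝ) : ℂ)) *
      (h.eigenvectorUnitary : Matrix (Fin k) (Fin k) ℂ)ᴴ := by
    intro k M h q; rw [mpow, dif_pos h]
  have mpsd : ∀ {k : ℕ} {M : Matrix (Fin k) (Fin k) ℂ} (_ : M.PosSemidef) (q : ℝ),
      (mpow M q).PosSemidef := by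
    intro k M h q
    rw [mp h.1]
    exact psd_conj _ _ fun i => Real.rpow_nonneg (h.eigenvalues_nonneg i) _
  have hX : ((Φ B)ᴴ * mpow A p * Φ B).PosSemidef :=
    (mpsd hA0 p).conjTranspose_mul_mul_same (Φ B)
  have hY : (Bᴴ * mpow (Ψ A) p * B).PosSemidef :=
    (mpsd hA' p).conjTranspose_mul_mul_same B
  have hC := mpsd hX (1 / p)
  have hC' := adj_psd hΦ hadj hC
  have hx0 := hX.eigenvalues_nonneg
  have key := lieb_mono hΦ hadj hp0 hp1 _ _ _ _ (herm_unit hA0.1) (herm_unit hX.1)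
    (herm_unit hA'.1) (herm_unit hC'.1) hA0.1.eigenvalues
    (fun i => hX.1.eigenvalues i ^ (1 / p)) hA'.1.eigenvalues hC'.1.eigenvalues
    hA0.eigenvalues_nonneg (fun i => Real.rpow_nonneg (hx0 i) _) hA'.eigenvalues_nonneg
    hC'.eigenvalues_nonneg (by rw [← herm_spec hA0.1, ← herm_spec hA'.1])
    (by rw [← mp hX.1, ← herm_spec hC'.1]) B
  have e1 := tr_conj (Φ B) hA0.1.eigenvectorUnitary hX.1.eigenvectorUnitary
    (fun i => hA0.1.eigenvalues i ^ p) (fun i => (hX.1.eigenvalues i ^ (1 / p)) ^ (1 - p))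
  have e2 := tr_conj B hA'.1.eigenvectorUnitary hC'.1.eigenvectorUnitary
    (fun i => hA'.1.eigenvalues i ^ p) (fun i => hC'.1.eigenvalues i ^ (1 - p))
  rw [← mp hA0.1] at e1
  rw [← mp hA'.1] at e2
  -- left side
  have e3 : ((Φ B)ᴴ * mpow A p * Φ B * ((hX.1.eigenvectorUnitary : Matrix (Fin n) (Fin n) ℂ) *
      Matrix.diagonal (fun i => (((hX.1.eigenvalues i ^ (1 / p)) ^ (1 - p) : ℝ) : ℂ)) *
      (hX.1.eigenvectorUnitary : Matrix (Fin n) (Fin n) ℂ)ᴴ)).trace =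
      ((∑ i, hX.1.eigenvalues i ^ (1 / p) : ℝ) : ℂ) := by
    rw [← tr_unit _ (herm_unit hX.1)]
    congr 1
    generalize hD : Matrix.diagonal (fun i => (((hX.1.eigenvalues i ^ (1 / p)) ^ (1 - p) : ℝ) : ℂ))
      = D
    have hu := mul_eq_one_comm.mp (herm_unit hX.1)
    conv_lhs => enter [1]; rw [herm_spec hX.1]
    calc _ = (hX.1.eigenvectorUnitary : Matrix (Fin n) (Fin n) ℂ) *
          Matrix.diagonal (fun i => (hX.1.eigenvalues i : ℂ)) *
          ((hX.1.eigenvectorUnitary : Matrix (Fin n) (Fin n) ℂ)ᴴ *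
          (hX.1.eigenvectorUnitary : Matrix (Fin n) (Fin n) ℂ)) * D *
          (hX.1.eigenvectorUnitary : Matrix (Fin n) (Fin n) ℂ)ᴴ := by
            simp only [Matrix.mul_assoc]
      _ = _ := by
        rw [hu, mul_one, ← hD, Matrix.mul_assoc _ (diagonal _) (diagonal _), diagonal_mul_diagonal]
        congr 3
        ext i
        rw [← Complex.ofReal_mul]
        congr 1
        have h0 := hx0 i
        rw [← Real.rpow_mul h0]
        nth_rewrite 1 [← Real.rpow_one (hX.1.eigenvalues i)]
        have hq : 1 + 1 / p * (1 - p) = 1 / p := by field_simp; ring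
        rw [← Real.rpow_add' h0 (by rw [hq]; positivity), hq]
  have e4 := tr_conj (1 : Matrix (Fin m) (Fin m) ℂ) hY.1.eigenvectorUnitary
    hC'.1.eigenvectorUnitary hY.1.eigenvalues (fun i => hC'.1.eigenvalues i ^ (1 - p))
  rw [← herm_spec hY.1, conjTranspose_one, one_mul, mul_one, e2, Complex.ofReal_inj] at e4
  rw [e3, Complex.ofReal_inj] at e1
  rw [← e1, e4] at key
  have yg := young_tr hp0 hp1 _ _ (herm_unit hY.1) (herm_unit hC'.1) hY.1.eigenvalues
    hC'.1.eigenvalues hY.eigenvalues_nonneg hC'.eigenvalues_nonneg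
  have t1 := adj_tr hunital hadj hC.1 hC'.1
  rw [mp hX.1, tr_unit _ (herm_unit hX.1), ← mp hX.1, herm_spec hC'.1,
    tr_unit _ (herm_unit hC'.1), Complex.ofReal_inj] at t1
  rw [mp hX.1, tr_unit _ (herm_unit hX.1), mp hY.1, tr_unit _ (herm_unit hY.1),
    Complex.ofReal_re, Complex.ofReal_re]
  rw [t1] at yg
  have h := key.trans yg
  refine le_of_mul_le_mul_left ?_ hp0
  linarith
end
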